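/- Let n ≥ 2 and let μ₁, …, μₙ be real numbers with ∑ᵢ μᵢ = 0, and set B = ∑ᵢ μᵢ². Then equality |∑ᵢ μᵢ³| = ((n−2)/√(n(n−1))) · B^{3/2} holds if and only if at least n−1 of the numbers μ₁, …, μₙ are equal, i.e. if and only if there exists an index i₀ such that μⱼ = μₖ for all j, k ≠ i₀. -/

import Mathlib

open Finset

/-!
Let `N` be the number of indices and write `∑ μ i ^ 2 = N (N - 1) t ^ 2` with `0 ≤ t`. Samuelson's
inequality `N μ i ^ 2 ≤ (N - 1) ∑ μ j ^ 2` reads `|μ i| ≤ (N - 1) t`, so every summand of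
`∑ ((N - 1) t - μ i) (μ i + t) ^ 2` is nonnegative, while expanding shows that this sum is
`N (N - 1) (N - 2) t ^ 3 - ∑ μ i ^ 3`. Equality in the upper bound for `∑ μ i ^ 3` therefore forces
each `μ i` to be `(N - 1) t` or `-t`; an index of the first kind attains equality in Samuelson's
inequality, which makes all the other entries equal to `-t`. The lower bound is the same statement
for `-μ`.
-/

theorem sum_eq_apply_add_of_forall_ne {ι R : Type*} [Fintype ι] [Ring R] {f : ι → R} {i : ι}
    {c : R} (h : ∀ j ≠ i, f j = c) :
    ∑ j, f j = f i + (Fintype.card ι - 1) * c := by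
  classical
  have hcard : ((#(univ.erase i) : ℕ) : R) = Fintype.card ι - 1 :=
    cast_card_erase_of_mem (mem_univ i)
  rw [← add_sum_erase univ f (mem_univ i), sum_congr rfl fun j hj => h j (ne_of_mem_erase hj),
    sum_const, nsmul_eq_mul, hcard]

section CommRing

variable {ι K : Type*} [Fintype ι] [CommRing K] {μ : ι → K}

theorem sum_erase_mul_add_sq_of_sum_eq_zero [DecidableEq ι] (hμ : ∑ i, μ i = 0) (i : ι) :
    ∑ j ∈ univ.erase i, ((Fintype.card ι - 1) * μ j + μ i) ^ 2 =
      (Fintype.card ι - 1) * ((Fintype.card ι - 1) * ∑ j, μ j ^ 2 - Fintype.card ι * μ i ^ 2) := by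
  have expand (j : ι) : ((Fintype.card ι - 1) * μ j + μ i) ^ 2 =
      (Fintype.card ι - 1) ^ 2 * μ j ^ 2 + 2 * (Fintype.card ι - 1) * μ i * μ j + μ i ^ 2 := by
    ring
  rw [sum_erase_eq_sub (mem_univ i)]
  simp only [expand, sum_add_distrib, ← mul_sum, hμ, sum_const, card_univ, nsmul_eq_mul]
  ring

theorem sum_sub_mul_add_sq_of_sum_sq_eq {t : K} (hμ : ∑ i, μ i = 0)
    (hsq : ∑ i, μ i ^ 2 = Fintype.card ι * (Fintype.card ι - 1) * t ^ 2) :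
    ∑ i, ((Fintype.card ι - 1) * t - μ i) * (μ i + t) ^ 2 =
      Fintype.card ι * (Fintype.card ι - 1) * (Fintype.card ι - 2) * t ^ 3 - ∑ i, μ i ^ 3 := by
  have expand (i : ι) : ((Fintype.card ι - 1) * t - μ i) * (μ i + t) ^ 2 =
      (Fintype.card ι - 3) * t * μ i ^ 2 + (2 * Fintype.card ι - 3) * t ^ 2 * μ i
        + (Fintype.card ι - 1) * t ^ 3 - μ i ^ 3 := by
    ring
  simp only [expand, sum_sub_distrib, sum_add_distrib, ← mul_sum, hμ, hsq, sum_const, card_univ,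
    nsmul_eq_mul]
  ring

end CommRing

section CharZero

variable {ι K : Type*} [Fintype ι] [Nontrivial ι] [CommRing K] [IsDomain K] [CharZero K]
  {μ : ι → K} {t : K}

theorem eq_or_eq_neg_of_forall_ne_eq (hμ : ∑ i, μ i = 0)
    (hsq : ∑ i, μ i ^ 2 = Fintype.card ι * (Fintype.card ι - 1) * t ^ 2) {i : ι} {c : K}
    (hc : ∀ j ≠ i, μ j = c) : c = t ∨ c = -t := by
  have hi : μ i = -((Fintype.card ι - 1) * c) :=
    eq_neg_of_add_eq_zero_left ((sum_eq_apply_add_of_forall_ne hc).symm.trans hμ)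
  have hsq' : ∑ j, μ j ^ 2 = μ i ^ 2 + (Fintype.card ι - 1) * c ^ 2 :=
    sum_eq_apply_add_of_forall_ne fun j hj => by rw [hc j hj]
  have hcard : (Fintype.card ι * (Fintype.card ι - 1) : K) ≠ 0 :=
    mul_ne_zero (Nat.cast_ne_zero.2 Fintype.card_ne_zero)
      (sub_ne_zero.2 (Nat.cast_ne_one.2 Fintype.one_lt_card.ne'))
  rw [← sq_eq_sq_iff_eq_or_eq_neg]
  apply mul_left_cancel₀ hcard
  rw [← hsq, hsq', hi]
  ring

theorem exists_forall_ne_eq_iff_eq_neg_or_eq (hμ : ∑ i, μ i = 0)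
    (hsq : ∑ i, μ i ^ 2 = Fintype.card ι * (Fintype.card ι - 1) * t ^ 2) :
    (∃ i, ∀ j k, j ≠ i → k ≠ i → μ j = μ k) ↔
      (∃ i, ∀ j ≠ i, μ j = -t) ∨ ∃ i, ∀ j ≠ i, μ j = t := by
  constructor
  · rintro ⟨i, hi⟩
    obtain ⟨k, hk⟩ := exists_ne i
    have hconst : ∀ j ≠ i, μ j = μ k := fun j hj => hi j k hj hk
    rcases eq_or_eq_neg_of_forall_ne_eq hμ hsq hconst with hkt | hkt
    · exact Or.inr ⟨i, fun j hj => (hconst j hj).trans hkt⟩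
    · exact Or.inl ⟨i, fun j hj => (hconst j hj).trans hkt⟩
  · rintro (⟨i, hi⟩ | ⟨i, hi⟩) <;>
      exact ⟨i, fun j k hj hk => (hi j hj).trans (hi k hk).symm⟩

end CharZero

section LinearOrder

variable {ι K : Type*} [Fintype ι] [CommRing K] [LinearOrder K] [IsStrictOrderedRing K]
  {μ : ι → K} {t : K}

theorem card_sub_one_mul_add_eq_zero_of_card_mul_sq_eq (hμ : ∑ i, μ i = 0) {i : ι}
    (hi : Fintype.card ι * μ i ^ 2 = (Fintype.card ι - 1) * ∑ j, μ j ^ 2) {j : ι} (hj : j ≠ i) :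
    (Fintype.card ι - 1) * μ j + μ i = 0 := by
  classical
  have hzero := sum_erase_mul_add_sq_of_sum_eq_zero hμ i
  rw [hi, sub_self, mul_zero, sum_eq_zero_iff_of_nonneg fun _ _ => sq_nonneg _] at hzero
  exact sq_eq_zero_iff.1 (hzero j (mem_erase.2 ⟨hj, mem_univ j⟩))

variable [Nontrivial ι]

variable (ι K) in
theorem cast_card_sub_one_pos : (0 : K) < Fintype.card ι - 1 :=
  sub_pos.2 (Nat.one_lt_cast.2 Fintype.one_lt_card)

variable (ι K) in
theorem cast_card_mul_card_sub_one_pos : (0 : K) < Fintype.card ι * (Fintype.card ι - 1) :=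
  mul_pos (Nat.cast_pos.2 Fintype.card_pos) (cast_card_sub_one_pos ι K)

theorem card_mul_sq_le_of_sum_eq_zero (hμ : ∑ i, μ i = 0) (i : ι) :
    Fintype.card ι * μ i ^ 2 ≤ (Fintype.card ι - 1) * ∑ j, μ j ^ 2 := by
  classical
  have hnonneg := sum_nonneg fun j (_ : j ∈ univ.erase i) =>
    sq_nonneg ((Fintype.card ι - 1) * μ j + μ i)
  rw [sum_erase_mul_add_sq_of_sum_eq_zero hμ] at hnonneg
  exact sub_nonneg.1 (nonneg_of_mul_nonneg_right hnonneg (cast_card_sub_one_pos ι K))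

theorem le_card_sub_one_mul_of_sum_sq_eq (hμ : ∑ i, μ i = 0)
    (hsq : ∑ i, μ i ^ 2 = Fintype.card ι * (Fintype.card ι - 1) * t ^ 2) (ht : 0 ≤ t) (i : ι) :
    μ i ≤ (Fintype.card ι - 1) * t := by
  have hcard : (0 : K) < Fintype.card ι := Nat.cast_pos.2 Fintype.card_pos
  have hle : Fintype.card ι * μ i ^ 2 ≤ Fintype.card ι * ((Fintype.card ι - 1) * t) ^ 2 :=
    calc Fintype.card ι * μ i ^ 2 ≤ (Fintype.card ι - 1) * ∑ j, μ j ^ 2 :=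
          card_mul_sq_le_of_sum_eq_zero hμ i
      _ = Fintype.card ι * ((Fintype.card ι - 1) * t) ^ 2 := by rw [hsq]; ring
  exact le_of_sq_le_sq (le_of_mul_le_mul_left hle hcard)
    (mul_nonneg (cast_card_sub_one_pos ι K).le ht)

theorem eq_neg_of_apply_eq_card_sub_one_mul (hμ : ∑ i, μ i = 0)
    (hsq : ∑ i, μ i ^ 2 = Fintype.card ι * (Fintype.card ι - 1) * t ^ 2) {i : ι}
    (hi : μ i = (Fintype.card ι - 1) * t) {j : ι} (hj : j ≠ i) : μ j = -t := by
  have hextremal : Fintype.card ι * μ i ^ 2 = (Fintype.card ι - 1) * ∑ j, μ j ^ 2 := by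
    rw [hi, hsq]; ring
  have hzero := card_sub_one_mul_add_eq_zero_of_card_mul_sq_eq hμ hextremal hj
  rw [hi, ← mul_add] at hzero
  exact eq_neg_of_add_eq_zero_left
    ((mul_eq_zero_iff_left (cast_card_sub_one_pos ι K).ne').1 hzero)

theorem sum_pow_three_eq_iff_exists_forall_ne_eq_neg (hμ : ∑ i, μ i = 0)
    (hsq : ∑ i, μ i ^ 2 = Fintype.card ι * (Fintype.card ι - 1) * t ^ 2) (ht : 0 ≤ t) :
    ∑ i, μ i ^ 3 = Fintype.card ι * (Fintype.card ι - 1) * (Fintype.card ι - 2) * t ^ 3 ↔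
      ∃ i, ∀ j ≠ i, μ j = -t := by
  have hnonneg (i : ι) : 0 ≤ ((Fintype.card ι - 1) * t - μ i) * (μ i + t) ^ 2 :=
    mul_nonneg (sub_nonneg.2 (le_card_sub_one_mul_of_sum_sq_eq hμ hsq ht i)) (sq_nonneg _)
  rw [eq_comm, ← sub_eq_zero, ← sum_sub_mul_add_sq_of_sum_sq_eq hμ hsq,
    sum_eq_zero_iff_of_nonneg fun i _ => hnonneg i]
  simp only [mem_univ, true_imp_iff, mul_eq_zero, sq_eq_zero_iff, sub_eq_zero,
    add_eq_zero_iff_eq_neg]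
  constructor
  · intro htwo
    by_cases hmax : ∃ i, (Fintype.card ι - 1) * t = μ i
    · obtain ⟨i, hi⟩ := hmax
      exact ⟨i, fun j hj => eq_neg_of_apply_eq_card_sub_one_mul hμ hsq hi.symm hj⟩
    · obtain ⟨i⟩ : Nonempty ι := inferInstance
      exact ⟨i, fun j _ => (htwo j).resolve_left fun hj => hmax ⟨j, hj⟩⟩
  · rintro ⟨i, hi⟩ j
    obtain rfl | hj := eq_or_ne j i
    · have hsum := sum_eq_apply_add_of_forall_ne hi
      left
      linear_combination hsum - hμ
    · exact Or.inr (hi j hj)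

theorem sum_pow_three_eq_neg_iff_exists_forall_ne_eq (hμ : ∑ i, μ i = 0)
    (hsq : ∑ i, μ i ^ 2 = Fintype.card ι * (Fintype.card ι - 1) * t ^ 2) (ht : 0 ≤ t) :
    ∑ i, μ i ^ 3 = -(Fintype.card ι * (Fintype.card ι - 1) * (Fintype.card ι - 2) * t ^ 3) ↔
      ∃ i, ∀ j ≠ i, μ j = t := by
  have hcube : ∑ i, (-μ) i ^ 3 = -∑ i, μ i ^ 3 := by
    simp only [Pi.neg_apply, Odd.neg_pow (by decide : Odd 3), sum_neg_distrib]
  rw [← neg_eq_iff_eq_neg, ← hcube, sum_pow_three_eq_iff_exists_forall_ne_eq_neg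
    (by simpa using hμ) (by simpa using hsq) ht]
  simp only [Pi.neg_apply, neg_inj]

theorem abs_sum_pow_three_eq_iff (hμ : ∑ i, μ i = 0)
    (hsq : ∑ i, μ i ^ 2 = Fintype.card ι * (Fintype.card ι - 1) * t ^ 2) (ht : 0 ≤ t) :
    |∑ i, μ i ^ 3| = Fintype.card ι * (Fintype.card ι - 1) * (Fintype.card ι - 2) * t ^ 3 ↔
      ∃ i, ∀ j k, j ≠ i → k ≠ i → μ j = μ k := by
  have htwo : (0 : K) ≤ Fintype.card ι - 2 :=
    sub_nonneg.2 (Nat.ofNat_le_cast.2 Fintype.one_lt_card)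
  have hbound : 0 ≤ Fintype.card ι * (Fintype.card ι - 1) * (Fintype.card ι - 2) * t ^ 3 :=
    mul_nonneg (mul_nonneg (cast_card_mul_card_sub_one_pos ι K).le htwo) (pow_nonneg ht 3)
  rw [abs_eq hbound, sum_pow_three_eq_iff_exists_forall_ne_eq_neg hμ hsq ht,
    sum_pow_three_eq_neg_iff_exists_forall_ne_eq hμ hsq ht,
    exists_forall_ne_eq_iff_eq_neg_or_eq hμ hsq]

end LinearOrder

theorem third_moment_bound_equality_iff_general {ι : Type*} [Fintype ι] [Nontrivial ι]
    (μ : ι → ℝ) (hsum : ∑ i, μ i = 0) (B : ℝ) (hB : B = ∑ i, μ i ^ 2) :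
    |∑ i, μ i ^ 3| = ((Fintype.card ι : ℝ) - 2) /
        Real.sqrt ((Fintype.card ι : ℝ) * ((Fintype.card ι : ℝ) - 1)) * (B * Real.sqrt B) ↔
      ∃ i₀ : ι, ∀ j k : ι, j ≠ i₀ → k ≠ i₀ → μ j = μ k := by
  have hB_nonneg : 0 ≤ B := hB ▸ sum_nonneg fun i _ => sq_nonneg (μ i)
  have hcard := cast_card_mul_card_sub_one_pos ι ℝ
  set t := Real.sqrt B / Real.sqrt (Fintype.card ι * (Fintype.card ι - 1)) with ht
  have hBt : B = Fintype.card ι * (Fintype.card ι - 1) * t ^ 2 := by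
    rw [ht, div_pow, Real.sq_sqrt hB_nonneg, Real.sq_sqrt hcard.le, mul_div_cancel₀ _ hcard.ne']
  have hbound : (Fintype.card ι - 2) / Real.sqrt (Fintype.card ι * (Fintype.card ι - 1)) *
      (B * Real.sqrt B) = Fintype.card ι * (Fintype.card ι - 1) * (Fintype.card ι - 2) * t ^ 3 :=
    calc _ = (Fintype.card ι - 2) * t * B := by rw [ht]; ring
      _ = _ := by rw [hBt]; ring
  rw [hbound]
  exact abs_sum_pow_three_eq_iff hsum (hB ▸ hBt) (by positivity)

/-- Equality case in the sharp third-moment bound: for `μ₁, …, μₙ` (n ≥ 2) with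
`∑ᵢ μᵢ = 0` and `B = ∑ᵢ μᵢ²`, equality `|∑ᵢ μᵢ³| = ((n−2)/√(n(n−1))) · B^{3/2}`
holds if and only if at least `n−1` of the `μᵢ` are equal, i.e. there is an index
`i₀` with `μⱼ = μₖ` for all `j, k ≠ i₀`. -/
theorem third_moment_bound_equality_iff (n : ℕ) (hn : 2 ≤ n) (μ : Fin n → ℝ)
    (hsum : ∑ i, μ i = 0) (B : ℝ) (hB : B = ∑ i, (μ i) ^ 2) :
    |∑ i, (μ i) ^ 3| = ((n : ℝ) - 2) / Real.sqrt ((n : ℝ) * ((n : ℝ) - 1)) * (B * Real.sqrt B)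
      ↔ ∃ i₀ : Fin n, ∀ j k : Fin n, j ≠ i₀ → k ≠ i₀ → μ j = μ k := by
  have : Nontrivial (Fin n) := Fin.nontrivial_iff_two_le.2 hn
  simpa only [Fintype.card_fin] using third_moment_bound_equality_iff_general μ hsum B hB
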